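/- Let S² := {x ∈ ℝ³ : ‖x‖ = 1}, and for θ ∈ ℝ let R_θ : S² → S² be the rotation by angle θ about the third coordinate axis, given by the matrix with rows (cos θ, −sin θ, 0), (sin θ, cos θ, 0), (0,0,1). For b = (b₁,b₂) ∈ ℤ² define the circle action ψ_b on S²×S² by ψ_b(t)(z,w) = (R_{2πb₂t}·z, R_{2πb₁t}·w). If b' = (b₁',b₂') ∈ ℤ² satisfies |b₁'| = |b₁| and |b₂'| = |b₂|, then ψ_b and ψ_{b'} are homotopic through circle actions by isometries: there exists a continuous map F : [0,1] × ℝ × (S²×S²) → S²×S² such that for every s ∈ [0,1], F(s,0,·) = id, F(s,t+t',·) = F(s,t, F(s,t',·)) for all t,t' ∈ ℝ, F(s,1,·) = id, each map F(s,t,·) : S²×S² → S²×S² is an isometry (for the metric induced from the Euclidean metric of ℝ³×ℝ³), and F(0,t,·) = ψ_b(t), F(1,t,·) = ψ_{b'}(t) for all t. -/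

import Mathlib

noncomputable section

/-- The unit sphere `S² = {x ∈ ℝ³ : ‖x‖ = 1}` in Euclidean `ℝ³`. -/
def Sph : Type := {x : EuclideanSpace ℝ (Fin 3) // ‖x‖ = 1}

instance : TopologicalSpace Sph := by unfold Sph; infer_instance

instance : CoeOut Sph (EuclideanSpace ℝ (Fin 3)) := ⟨fun x => x.1⟩

/-- Rotation of `ℝ³` by angle `θ` about the third coordinate axis, given by the matrix with rows
`(cos θ, −sin θ, 0)`, `(sin θ, cos θ, 0)`, `(0,0,1)`. -/
def rot3 (θ : ℝ) (v : EuclideanSpace ℝ (Fin 3)) : EuclideanSpace ℝ (Fin 3) :=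
  (WithLp.equiv 2 (Fin 3 → ℝ)).symm
    ![Real.cos θ * v 0 - Real.sin θ * v 1,
      Real.sin θ * v 0 + Real.cos θ * v 1,
      v 2]

/-- The distance on `S² × S²` induced from the Euclidean metric of `ℝ³ × ℝ³`. -/
def pdist (p q : Sph × Sph) : ℝ :=
  Real.sqrt (dist (p.1 : EuclideanSpace ℝ (Fin 3)) (q.1 : EuclideanSpace ℝ (Fin 3)) ^ 2 +
    dist (p.2 : EuclideanSpace ℝ (Fin 3)) (q.2 : EuclideanSpace ℝ (Fin 3)) ^ 2)

end

/-!
Rotation about a unit axis `n` is `1 + sin θ • J + (1 - cos θ) • J²` (Rodrigues), where `J` is the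
matrix of the cross product with `n`. Since `J³ = -J` and `Jᵀ = -J`, for each axis this is a
one-parameter group of orthogonal matrices, of period `2π` in `θ` and depending continuously on `n`.
Reversing the axis reverses the sense of rotation, so moving the axis of either factor along a path
in `S²` from the north pole to the south pole changes the sign of the corresponding weight.
-/

noncomputable section

open Real Matrix

section Rodrigues

variable {A : Type*} [Ring A] [Algebra ℝ A]

/-- Rodrigues' formula. When `J ^ 3 = -J` it computes `exp (θ J)`; in this form it makes sense in
any real algebra, without a topology. -/
def rodrigues (J : A) (θ : ℝ) : A :=
  1 + sin θ • J + (1 - cos θ) • J ^ 2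

lemma rodrigues_two_pi_mul_int (J : A) (k : ℤ) : rodrigues J (2 * π * k) = 1 := by
  have hcos : cos (2 * π * k) = 1 := by rw [mul_comm, cos_int_mul_two_pi]
  have hsin : sin (2 * π * k) = 0 := by
    simpa only [zero_add, sin_zero, mul_comm] using sin_add_int_mul_two_pi 0 k
  simp [rodrigues, hcos, hsin]

lemma rodrigues_zero (J : A) : rodrigues J 0 = 1 := by
  simpa using rodrigues_two_pi_mul_int J 0

lemma rodrigues_neg_left (J : A) (θ : ℝ) : rodrigues (-J) θ = rodrigues J (-θ) := by
  simp [rodrigues]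

lemma rodrigues_add {J : A} (hJ : J ^ 3 = -J) (θ φ : ℝ) :
    rodrigues J (θ + φ) = rodrigues J θ * rodrigues J φ := by
  have hJ₂₁ : J ^ 2 * J = -J := by rw [← pow_succ, hJ]
  have hJ₁₂ : J * J ^ 2 = -J := by rw [← pow_succ', hJ]
  have hJ₂₂ : J ^ 2 * J ^ 2 = -J ^ 2 := by rw [← pow_add, pow_succ J 3, hJ, neg_mul, ← sq]
  simp only [rodrigues, sin_add, cos_add, add_mul, mul_add, one_mul, mul_one, smul_mul_smul_comm,
    hJ₂₁, hJ₁₂, hJ₂₂, ← sq J]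
  module

lemma star_rodrigues [StarRing A] [StarModule ℝ A] {J : A} (hJ : star J = -J) (θ : ℝ) :
    star (rodrigues J θ) = rodrigues J (-θ) := by
  simp [rodrigues, hJ]

lemma rodrigues_mem_unitary [StarRing A] [StarModule ℝ A] {J : A} (hJ : J ^ 3 = -J)
    (hJ_star : star J = -J) (θ : ℝ) : rodrigues J θ ∈ unitary A := by
  rw [Unitary.mem_iff, star_rodrigues hJ_star, ← rodrigues_add hJ, ← rodrigues_add hJ,
    neg_add_cancel, add_neg_cancel, rodrigues_zero]
  exact ⟨rfl, rfl⟩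

@[fun_prop]
lemma continuous_rodrigues [TopologicalSpace A] [ContinuousAdd A] [ContinuousMul A]
    [ContinuousSMul ℝ A] {X : Type*} [TopologicalSpace X] {J : X → A} {θ : X → ℝ}
    (hJ : Continuous J) (hθ : Continuous θ) : Continuous fun x ↦ rodrigues (J x) (θ x) := by
  unfold rodrigues
  fun_prop

end Rodrigues

section CrossMatrix

variable {R : Type*} [CommRing R]

/-- The matrix of the cross product `w ↦ v ⨯₃ w`. -/
def crossMatrix (v : Fin 3 → R) : Matrix (Fin 3) (Fin 3) R :=
  !![0, -v 2, v 1;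
     v 2, 0, -v 0;
     -v 1, v 0, 0]

lemma crossMatrix_neg (v : Fin 3 → R) : crossMatrix (-v) = -crossMatrix v := by
  ext i j
  fin_cases i <;> fin_cases j <;> simp [crossMatrix]

lemma star_crossMatrix [StarRing R] [TrivialStar R] (v : Fin 3 → R) :
    star (crossMatrix v) = -crossMatrix v := by
  ext i j
  fin_cases i <;> fin_cases j <;> simp [crossMatrix, star_apply]

lemma crossMatrix_pow_three (v : Fin 3 → R) :
    crossMatrix v ^ 3 = -(v ⬝ᵥ v) • crossMatrix v := by
  ext i j
  fin_cases i <;> fin_cases j <;>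
    simp [crossMatrix, pow_succ, Matrix.mul_apply, Fin.sum_univ_three, dotProduct] <;> ring

@[fun_prop]
lemma continuous_crossMatrix [TopologicalSpace R] [ContinuousNeg R] :
    Continuous (crossMatrix : (Fin 3 → R) → Matrix (Fin 3) (Fin 3) R) := by
  unfold crossMatrix
  fun_prop

end CrossMatrix

lemma norm_toEuclideanCLM_apply_of_mem_unitaryGroup {ι 𝕜 : Type*} [Fintype ι] [DecidableEq ι]
    [RCLike 𝕜] {U : Matrix ι ι 𝕜} (hU : U ∈ unitaryGroup ι 𝕜) (x : EuclideanSpace 𝕜 ι) :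
    ‖toEuclideanCLM (𝕜 := 𝕜) U x‖ = ‖x‖ :=
  ContinuousLinearMap.norm_map_of_mem_unitary (Unitary.map_mem toEuclideanCLM hU) x

namespace Sph

instance : PathConnectedSpace Sph := by
  have hrank : 1 < Module.rank ℝ (EuclideanSpace ℝ (Fin 3)) := by
    rw [← Module.finrank_eq_rank, finrank_euclideanSpace_fin]
    norm_num
  have hconn : IsPathConnected {x : EuclideanSpace ℝ (Fin 3) | ‖x‖ = 1} := by
    simpa only [Metric.sphere, dist_zero_right] using isPathConnected_sphere hrank 0 zero_le_one
  exact isPathConnected_iff_pathConnectedSpace.mp hconn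

/-- The antipodal map. -/
instance : Neg Sph := ⟨fun n ↦ ⟨-n.1, by rw [norm_neg, n.2]⟩⟩

/-- The north pole `(0, 0, 1)`, the axis of `rot3`. -/
def northPole : Sph := ⟨EuclideanSpace.single 2 1, by simp⟩

lemma crossMatrix_pow_three_eq_neg (n : Sph) :
    crossMatrix n.1.ofLp ^ 3 = -crossMatrix n.1.ofLp := by
  have hn : n.1.ofLp ⬝ᵥ n.1.ofLp = 1 := by
    have hinner := real_inner_self_eq_norm_sq n.1
    rwa [n.2, one_pow, EuclideanSpace.inner_eq_star_dotProduct, star_trivial] at hinner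
  rw [crossMatrix_pow_three, hn, neg_one_smul]

/-- The rotation of `ℝ³` by angle `θ` about the axis `n`, counterclockwise as seen from the tip
of `n`. -/
def rotationMatrix (n : Sph) (θ : ℝ) : Matrix (Fin 3) (Fin 3) ℝ :=
  rodrigues (crossMatrix n.1.ofLp) θ

lemma rotationMatrix_mem_unitaryGroup (n : Sph) (θ : ℝ) :
    rotationMatrix n θ ∈ unitaryGroup (Fin 3) ℝ :=
  rodrigues_mem_unitary n.crossMatrix_pow_three_eq_neg (star_crossMatrix _) θ

/-- The action of `rotationMatrix n θ` on the sphere. -/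
def rotate (n : Sph) (θ : ℝ) (p : Sph) : Sph :=
  ⟨toEuclideanCLM (𝕜 := ℝ) (rotationMatrix n θ) p.1,
    (norm_toEuclideanCLM_apply_of_mem_unitaryGroup
      (rotationMatrix_mem_unitaryGroup n θ) p.1).trans p.2⟩

lemma rotate_two_pi_mul_int (n : Sph) (k : ℤ) (p : Sph) : rotate n (2 * π * k) p = p :=
  Subtype.ext <| by simp [rotate, rotationMatrix, rodrigues_two_pi_mul_int]

lemma rotate_zero (n p : Sph) : rotate n 0 p = p := by
  simpa using rotate_two_pi_mul_int n 0 p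

lemma rotate_add (n : Sph) (θ φ : ℝ) (p : Sph) :
    rotate n (θ + φ) p = rotate n θ (rotate n φ p) :=
  Subtype.ext <| by simp [rotate, rotationMatrix, rodrigues_add n.crossMatrix_pow_three_eq_neg]

lemma dist_rotate (n : Sph) (θ : ℝ) (p q : Sph) :
    dist (rotate n θ p).1 (rotate n θ q).1 = dist p.1 q.1 := by
  simp only [rotate, dist_eq_norm, ← map_sub, norm_toEuclideanCLM_apply_of_mem_unitaryGroup
    (rotationMatrix_mem_unitaryGroup n θ)]

lemma rotate_neg_axis (n : Sph) (θ : ℝ) (p : Sph) : rotate (-n) θ p = rotate n (-θ) p := by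
  have hneg : rotationMatrix (-n) θ = rotationMatrix n (-θ) :=
    (congrArg (rodrigues · θ) (crossMatrix_neg _)).trans (rodrigues_neg_left _ θ)
  exact Subtype.ext <| by simp only [rotate, hneg]

lemma rotate_northPole (θ : ℝ) (p : Sph) : (rotate northPole θ p).1 = rot3 θ p.1 := by
  ext i
  fin_cases i <;>
    simp [rotate, rotationMatrix, northPole, rodrigues, crossMatrix, rot3, pow_two, mulVec,
      dotProduct, Fin.sum_univ_three] <;> ring

@[fun_prop]
lemma continuous_rotate {X : Type*} [TopologicalSpace X] {n p : X → Sph} {θ : X → ℝ}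
    (hn : Continuous n) (hθ : Continuous θ) (hp : Continuous p) :
    Continuous fun x ↦ rotate (n x) (θ x) (p x) := by
  have hmul : Continuous fun x ↦ rotationMatrix (n x) (θ x) *ᵥ (p x).1.ofLp := by
    unfold rotationMatrix
    fun_prop
  exact Continuous.subtype_mk ((PiLp.continuous_toLp 2 _).comp hmul) _

lemma exists_axis_rotate_eq_rot3 {b b' : ℤ} (h : |b'| = |b|) :
    ∃ n : Sph, ∀ (t : ℝ) (p : Sph), (rotate n (2 * π * b * t) p).1 = rot3 (2 * π * b' * t) p.1 := by
  rcases abs_eq_abs.mp h with rfl | rfl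
  · exact ⟨northPole, fun t p ↦ rotate_northPole _ p⟩
  · refine ⟨-northPole, fun t p ↦ ?_⟩
    rw [rotate_neg_axis, rotate_northPole, Int.cast_neg, mul_neg, neg_mul]

lemma exists_axis_path_rotate_eq_rot3 {b b' : ℤ} (h : |b'| = |b|) :
    ∃ γ : C(unitInterval, Sph),
      (∀ (t : ℝ) (p : Sph), (rotate (γ 0) (2 * π * b * t) p).1 = rot3 (2 * π * b * t) p.1) ∧
      ∀ (t : ℝ) (p : Sph), (rotate (γ 1) (2 * π * b * t) p).1 = rot3 (2 * π * b' * t) p.1 := by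
  obtain ⟨n, hn⟩ := exists_axis_rotate_eq_rot3 h
  obtain ⟨γ⟩ := PathConnectedSpace.joined northPole n
  have hsource : (γ : C(unitInterval, Sph)) 0 = northPole := γ.source
  have htarget : (γ : C(unitInterval, Sph)) 1 = n := γ.target
  refine ⟨γ, fun t p ↦ ?_, fun t p ↦ ?_⟩
  · rw [hsource, rotate_northPole]
  · rw [htarget, hn]

end Sph

end

/-- The homotopy construction proving (i) ⟹ (iii) of Theorem 1.9 (Thmspheres) of the paper:
if `|b₁'| = |b₁|` and `|b₂'| = |b₂|`, the circle actions
`ψ_b(t)(z,w) = (R_{2πb₂t} z, R_{2πb₁t} w)` and `ψ_{b'}` on `S² × S²` are homotopic through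
circle actions acting by isometries of the metric induced from the Euclidean metric of
`ℝ³ × ℝ³`. -/
theorem sphere_circle_actions_homotopic
    (b₁ b₂ b₁' b₂' : ℤ) (h1 : |b₁'| = |b₁|) (h2 : |b₂'| = |b₂|) :
    ∃ F : Set.Icc (0 : ℝ) 1 × ℝ × (Sph × Sph) → Sph × Sph,
      Continuous F ∧
      (∀ s p, F (s, 0, p) = p) ∧
      (∀ s t t' p, F (s, t + t', p) = F (s, t, F (s, t', p))) ∧
      (∀ s p, F (s, 1, p) = p) ∧
      (∀ s t p q, pdist (F (s, t, p)) (F (s, t, q)) = pdist p q) ∧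
      (∀ (t : ℝ) (p : Sph × Sph),
        ((F (⟨0, by norm_num⟩, t, p)).1 : EuclideanSpace ℝ (Fin 3)) =
            rot3 (2 * Real.pi * b₂ * t) (p.1 : EuclideanSpace ℝ (Fin 3)) ∧
        ((F (⟨0, by norm_num⟩, t, p)).2 : EuclideanSpace ℝ (Fin 3)) =
            rot3 (2 * Real.pi * b₁ * t) (p.2 : EuclideanSpace ℝ (Fin 3))) ∧
      (∀ (t : ℝ) (p : Sph × Sph),
        ((F (⟨1, by norm_num⟩, t, p)).1 : EuclideanSpace ℝ (Fin 3)) =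
            rot3 (2 * Real.pi * b₂' * t) (p.1 : EuclideanSpace ℝ (Fin 3)) ∧
        ((F (⟨1, by norm_num⟩, t, p)).2 : EuclideanSpace ℝ (Fin 3)) =
            rot3 (2 * Real.pi * b₁' * t) (p.2 : EuclideanSpace ℝ (Fin 3))) := by
  obtain ⟨γ₁, hγ₁_zero, hγ₁_one⟩ := Sph.exists_axis_path_rotate_eq_rot3 h1
  obtain ⟨γ₂, hγ₂_zero, hγ₂_one⟩ := Sph.exists_axis_path_rotate_eq_rot3 h2
  refine ⟨fun x ↦ (Sph.rotate (γ₂ x.1) (2 * Real.pi * b₂ * x.2.1) x.2.2.1,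
    Sph.rotate (γ₁ x.1) (2 * Real.pi * b₁ * x.2.1) x.2.2.2), by fun_prop, ?_, ?_, ?_, ?_,
    fun t p ↦ ⟨hγ₂_zero t p.1, hγ₁_zero t p.2⟩, fun t p ↦ ⟨hγ₂_one t p.1, hγ₁_one t p.2⟩⟩
  · intro s p
    simp only [mul_zero, Sph.rotate_zero]
  · intro s t t' p
    simp only [mul_add, Sph.rotate_add]
  · intro s p
    simp only [mul_one, Sph.rotate_two_pi_mul_int]
  · intro s t p q
    simp only [pdist, Sph.dist_rotate]
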